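/- For integers a, b not divisible by N, the integral ∫₀^∞ (1/(iNt)) d[ ∑_{m≥1} ((ζ^{am} − ζ^{−am})/m) ( ∑_{n≥1, n≡b mod N} − ∑_{n≥1, n≡−b mod N} ) exp(−2πmn/(N²t)) ] equals −i·Cl₂(2πa/N)·(1+ζ^b)/(1−ζ^b), where ζ = exp(2πi/N). -/

import Mathlib

open Real MeasureTheory

/-- Clausen's dilogarithmic function `Cl₂(x) = ∑_{m≥1} sin(mx)/m²`. -/
noncomputable def Cl2 (x : ℝ) : ℝ := ∑' m : ℕ+, Real.sin (m * x) / (m : ℝ) ^ 2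

/-- The root of unity `ζ_N = exp(2πi/N)`. -/
noncomputable def zetaN (N : ℤ) : ℂ := Complex.exp (2 * π * Complex.I / N)

/-- The double series
`S(t) = ∑_{m≥1} ((ζ^{am}-ζ^{-am})/m) (∑_{n≡b (N)} - ∑_{n≡-b (N)}) exp(-2πmn/(N²t))`. -/
noncomputable def Sser (N a b : ℤ) (t : ℝ) : ℂ :=
  ∑' p : ℕ+ × ℕ+,
    ((zetaN N ^ (a * (p.1 : ℤ)) - zetaN N ^ (-(a * (p.1 : ℤ)))) / (p.1 : ℂ)) *
      (if (p.2 : ℤ) ≡ b [ZMOD N] then 1 else if (p.2 : ℤ) ≡ -b [ZMOD N] then -1 else 0) *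
      Complex.exp (-(2 * π * (p.1 : ℝ) * (p.2 : ℝ)) / ((N : ℝ) ^ 2 * t))

/-!
Substituting `u = 2π / (N² t)` turns the integral into a multiple of the first moment
`∫ u ∑ sin(mθ) n ε(n) e^{-mnu} du`, where `θ = 2πa/N` and `ε` is the sign of the class of `n`.
Rescaling the inner series by `m` splits this moment as `Cl₂(θ)` times
`∫ v ∑ n ε(n) e^{-nv} dv`. If `b ≢ -b`, pairing the `k`-th elements of the classes `b` and `-b`
makes the last integral converge absolutely to `∑ (1/p - 1/q)`, the partial fraction expansion
of the cotangent, which is also what `(1 + ζ^b) / (1 - ζ^b)` is up to a factor.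

If `b ≡ -b`, the sign is the indicator of one class, because the first branch of the
conditional in `Sser` wins, and the cotangent is zero. Either `sin θ = 0` and the integrand
vanishes, or comparing the Poisson kernel `∑ sin(mθ) e^{-mv}` with `e^{-v}` bounds the moment
below by `∑ ε(n)/n = ∞`; the integrand is then not integrable and its Bochner integral is `0`
by convention.
-/

section Integration

theorem integrable_tsum_of_summable_integral_norm {α ι E : Type*} [MeasurableSpace α]
    {μ : Measure α} [NormedAddCommGroup E] [CompleteSpace E] [Countable ι] {F : ι → α → E}
    (hF : ∀ i, Integrable (F i) μ) (hsum : Summable fun i => ∫ x, ‖F i x‖ ∂μ) :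
    Integrable (fun x => ∑' i, F i x) μ := by
  have hmeas (i : ι) : AEMeasurable (fun x => ‖F i x‖ₑ) μ := (hF i).1.enorm
  have hfin : ∫⁻ x, ∑' i, ‖F i x‖ₑ ∂μ < ⊤ := by
    rw [lintegral_tsum hmeas]
    simp only [← ofReal_integral_norm_eq_lintegral_enorm (hF _)]
    exact hsum.tsum_ofReal_lt_top
  have hsummable : ∀ᵐ x ∂μ, Summable fun i => F i x := by
    filter_upwards [ae_lt_top' (AEMeasurable.tsum hmeas) hfin.ne] with x hx
    exact .of_norm (by simpa [summable_norm_iff] using! ENNReal.summable_toReal hx.ne)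
  refine ⟨aestronglyMeasurable_of_tendsto_ae Filter.atTop
    (f := fun (A : Finset ι) x => ∑ i ∈ A, F i x)
    (fun A => Finset.aestronglyMeasurable_fun_sum A fun i _ => (hF i).1)
    (hsummable.mono fun x hx => hx.hasSum), ?_⟩
  exact (lintegral_mono fun x => enorm_tsum_le_tsum_enorm).trans_lt hfin

theorem integral_inv_smul_deriv_comp_div {E : Type*} [NormedAddCommGroup E] [NormedSpace ℝ E]
    {F F' : ℝ → E} {c : ℝ} (hc : 0 < c) (hF : ∀ u, 0 < u → HasDerivAt F (F' u) u) :
    ∫ t in Set.Ioi (0 : ℝ), t⁻¹ • deriv (fun t => F (c / t)) t =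
      -c⁻¹ • ∫ u in Set.Ioi (0 : ℝ), u • F' u := by
  have hderiv {t : ℝ} (ht : 0 < t) :
      deriv (fun t => F (c / t)) t = (c * -(t ^ 2)⁻¹) • F' (c / t) :=
    ((hF _ (div_pos hc ht)).scomp t ((hasDerivAt_inv ht.ne').const_mul c)).deriv
  have hscale := integral_comp_mul_left_Ioi (fun u => u • F' u) 0 hc
  rw [mul_zero] at hscale
  rw [neg_smul, ← hscale,
    ← integral_comp_rpow_Ioi (fun u => (c * u) • F' (c * u)) (neg_ne_zero.2 one_ne_zero),
    ← integral_neg]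
  refine setIntegral_congr_fun measurableSet_Ioi fun t (ht : 0 < t) => ?_
  have hpow : t ^ (-1 - 1 : ℝ) = (t ^ 2)⁻¹ := by
    rw [show (-1 - 1 : ℝ) = -(2 : ℕ) by norm_num, rpow_neg ht.le, rpow_natCast]
  simp only [hderiv ht, hpow, rpow_neg_one, smul_smul, abs_neg, abs_one, one_mul, ← neg_smul,
    ← div_eq_mul_inv c]
  congr 1
  field_simp

theorem integral_mul_tsum_comp_mul {ι : Type*} [Countable ι] {w a : ι → ℝ} {h : ℝ → ℝ}
    (ha : ∀ i, 0 < a i) (hw : Summable fun i => w i / a i ^ 2)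
    (hh : IntegrableOn (fun u => u * h u) (Set.Ioi 0)) :
    ∫ u in Set.Ioi (0 : ℝ), u * ∑' i, w i * h (a i * u) =
      (∑' i, w i / a i ^ 2) * ∫ u in Set.Ioi (0 : ℝ), u * h u := by
  have hform (i : ι) (u : ℝ) : u * (w i * h (a i * u)) =
      w i / a i * (a i * u * h (a i * u)) := by
    field_simp [(ha i).ne']
  have hscale (g : ℝ → ℝ) (i : ι) : ∫ u in Set.Ioi (0 : ℝ), g (a i * u) =
      (a i)⁻¹ * ∫ u in Set.Ioi (0 : ℝ), g u := by
    simpa using integral_comp_mul_left_Ioi g 0 (ha i)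
  simp only [← tsum_mul_left, ← tsum_mul_right]
  rw [← integral_tsum_of_summable_integral_norm]
  · refine tsum_congr fun i => ?_
    simp only [hform]
    rw [integral_const_mul, hscale fun u => u * h u]
    field_simp
  · intro i
    simp only [hform]
    have hhi : IntegrableOn (fun u => a i * u * h (a i * u)) (Set.Ioi 0) := by
      simpa using (integrableOn_Ioi_comp_mul_left_iff (fun u => u * h u) 0 (ha i)).2
        (by simpa using hh)
    exact hhi.const_mul _
  · refine (hw.norm.mul_right (∫ u in Set.Ioi (0 : ℝ), ‖u * h u‖)).congr fun i => ?_
    simp only [hform, norm_mul (w i / a i)]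
    rw [integral_const_mul, hscale fun u => ‖u * h u‖, norm_div, norm_div, norm_pow,
      norm_of_nonneg (ha i).le]
    field_simp

theorem integral_pow_mul_exp_neg_mul_Ioi (k : ℕ) {r : ℝ} (hr : 0 < r) :
    ∫ u in Set.Ioi (0 : ℝ), u ^ k * rexp (-(r * u)) = k.factorial / r ^ (k + 1) := by
  have h := integral_rpow_mul_exp_neg_mul_Ioi (a := k + 1) (by positivity) hr
  rw [Gamma_nat_eq_factorial, add_sub_cancel_right] at h
  simpa [← Nat.cast_add_one, -Nat.cast_add, div_eq_inv_mul] using h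

theorem integrableOn_pow_mul_exp_neg_mul_Ioi (k : ℕ) {r : ℝ} (hr : 0 < r) :
    IntegrableOn (fun u => u ^ k * rexp (-(r * u))) (Set.Ioi 0) :=
  .of_integral_ne_zero (by rw [integral_pow_mul_exp_neg_mul_Ioi k hr]; positivity)

theorem summable_div_sq_of_integrableOn_mul {ι : Type*} {w a : ι → ℝ} {f : ℝ → ℝ}
    (ha : ∀ i, 0 < a i) (hw : ∀ i, 0 ≤ w i)
    (hf : IntegrableOn (fun u => u * f u) (Set.Ioi 0))
    (hle : ∀ u, 0 < u → ∀ A : Finset ι, ∑ i ∈ A, w i * rexp (-(a i * u)) ≤ f u) :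
    Summable fun i => w i / a i ^ 2 := by
  refine summable_of_sum_le (c := ∫ u in Set.Ioi (0 : ℝ), u * f u)
    (fun i => div_nonneg (hw i) (sq_nonneg _)) fun A => ?_
  have hint (i : ι) : IntegrableOn (fun u => w i * (u ^ 1 * rexp (-(a i * u)))) (Set.Ioi 0) :=
    (integrableOn_pow_mul_exp_neg_mul_Ioi 1 (ha i)).const_mul _
  calc ∑ i ∈ A, w i / a i ^ 2
      = ∫ u in Set.Ioi (0 : ℝ), ∑ i ∈ A, w i * (u ^ 1 * rexp (-(a i * u))) := by
        rw [integral_finsetSum _ fun i _ => hint i]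
        refine Finset.sum_congr rfl fun i _ => ?_
        rw [integral_const_mul, integral_pow_mul_exp_neg_mul_Ioi 1 (ha i)]
        simp [div_eq_mul_inv]
    _ ≤ ∫ u in Set.Ioi (0 : ℝ), u * f u := by
        refine setIntegral_mono_on (integrable_finsetSum _ fun i _ => hint i) hf
          measurableSet_Ioi fun u (hu : 0 < u) => ?_
        simp only [pow_one, mul_left_comm _ u, ← Finset.mul_sum]
        exact mul_le_mul_of_nonneg_left (hle u hu A) hu.le

theorem abs_mul_exp_neg_sub_le {p q v : ℝ} (hp : 0 < p) (hq : 0 < q) (hv : 0 < v) :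
    |p * rexp (-(p * v)) - q * rexp (-(q * v))| ≤
      |p - q| * ((1 + min p q * v) * rexp (-(min p q * v))) := by
  wlog hpq : p ≤ q generalizing p q
  · rw [abs_sub_comm, abs_sub_comm p, min_comm]
    exact this hq hp (le_of_not_ge hpq)
  have hanti : rexp (-(q * v)) ≤ rexp (-(p * v)) := by gcongr
  have hchord : rexp (-(p * v)) * (1 - (q - p) * v) ≤ rexp (-(q * v)) := by
    rw [show -(q * v) = -(p * v) + -((q - p) * v) by ring, Real.exp_add]
    gcongr
    linarith [add_one_le_exp (-((q - p) * v))]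
  have hpos := exp_pos (-(p * v))
  have hpv : 0 < p * v := mul_pos hp hv
  rw [min_eq_left hpq, abs_sub_comm p q, abs_of_nonneg (sub_nonneg.2 hpq), abs_le]
  constructor
  · nlinarith [mul_le_mul_of_nonneg_left hanti hq.le,
      mul_nonneg (mul_nonneg (sub_nonneg.2 hpq) hpv.le) hpos.le]
  · nlinarith [mul_le_mul_of_nonneg_left hchord hp.le, mul_nonneg (sub_nonneg.2 hpq) hpos.le,
      mul_le_mul_of_nonneg_right hpq (exp_pos (-(q * v))).le]

theorem integrableOn_mul_sub_mul_exp {p q : ℝ} (hp : 0 < p) (hq : 0 < q) :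
    IntegrableOn (fun v => v * (p * rexp (-(p * v)) - q * rexp (-(q * v)))) (Set.Ioi 0) := by
  refine (((integrableOn_pow_mul_exp_neg_mul_Ioi 1 hp).const_mul p).sub
    ((integrableOn_pow_mul_exp_neg_mul_Ioi 1 hq).const_mul q)).congr (.of_forall fun v => ?_)
  simp only [Pi.sub_apply]
  ring

theorem integral_mul_sub_mul_exp {p q : ℝ} (hp : 0 < p) (hq : 0 < q) :
    ∫ v in Set.Ioi (0 : ℝ), v * (p * rexp (-(p * v)) - q * rexp (-(q * v))) = 1 / p - 1 / q := by
  have hdist (v : ℝ) : v * (p * rexp (-(p * v)) - q * rexp (-(q * v))) =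
      p * (v ^ 1 * rexp (-(p * v))) - q * (v ^ 1 * rexp (-(q * v))) := by
    ring
  simp only [hdist]
  rw [integral_sub ((integrableOn_pow_mul_exp_neg_mul_Ioi 1 hp).const_mul p)
    ((integrableOn_pow_mul_exp_neg_mul_Ioi 1 hq).const_mul q), integral_const_mul,
    integral_const_mul, integral_pow_mul_exp_neg_mul_Ioi 1 hp,
    integral_pow_mul_exp_neg_mul_Ioi 1 hq, Nat.factorial_one, Nat.cast_one,
    one_add_one_eq_two]
  field_simp

theorem integral_norm_mul_sub_mul_exp_le {p q : ℝ} (hp : 0 < p) (hq : 0 < q) :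
    ∫ v in Set.Ioi (0 : ℝ), ‖v * (p * rexp (-(p * v)) - q * rexp (-(q * v)))‖ ≤
      3 * (|p - q| / min p q ^ 2) := by
  set m := min p q with hm
  have hm0 : 0 < m := lt_min hp hq
  have hlin := integrableOn_pow_mul_exp_neg_mul_Ioi 1 hm0
  have hquad := (integrableOn_pow_mul_exp_neg_mul_Ioi 2 hm0).const_mul m
  calc _ ≤ ∫ v in Set.Ioi (0 : ℝ),
        |p - q| * (v ^ 1 * rexp (-(m * v)) + m * (v ^ 2 * rexp (-(m * v)))) := by
        refine setIntegral_mono_on (integrableOn_mul_sub_mul_exp hp hq).norm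
          ((hlin.add hquad).const_mul _) measurableSet_Ioi fun v (hv : 0 < v) => ?_
        rw [norm_mul, norm_of_nonneg hv.le, norm_eq_abs]
        refine (mul_le_mul_of_nonneg_left (abs_mul_exp_neg_sub_le hp hq hv) hv.le).trans_eq ?_
        rw [← hm]
        ring
    _ = 3 * (|p - q| / m ^ 2) := by
        rw [integral_const_mul, integral_add hlin hquad, integral_const_mul,
          integral_pow_mul_exp_neg_mul_Ioi 1 hm0, integral_pow_mul_exp_neg_mul_Ioi 2 hm0]
        norm_num [Nat.factorial]
        field_simp
        norm_num

section PairedExponentials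

variable {ι : Type*} {p q : ι → ℝ}

theorem summable_integral_norm_mul_sub_mul_exp (hp : ∀ i, 0 < p i) (hq : ∀ i, 0 < q i)
    (hpq : Summable fun i => |p i - q i| / min (p i) (q i) ^ 2) :
    Summable fun i => ∫ v in Set.Ioi (0 : ℝ),
      ‖v * (p i * rexp (-(p i * v)) - q i * rexp (-(q i * v)))‖ :=
  (hpq.mul_left 3).of_nonneg_of_le (fun _ => integral_nonneg fun _ => norm_nonneg _)
    fun i => integral_norm_mul_sub_mul_exp_le (hp i) (hq i)

theorem integrableOn_mul_tsum_sub_mul_exp [Countable ι] (hp : ∀ i, 0 < p i)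
    (hq : ∀ i, 0 < q i) (hpq : Summable fun i => |p i - q i| / min (p i) (q i) ^ 2) :
    IntegrableOn (fun v => v * ∑' i, (p i * rexp (-(p i * v)) - q i * rexp (-(q i * v))))
      (Set.Ioi 0) := by
  simp only [← tsum_mul_left]
  exact integrable_tsum_of_summable_integral_norm
    (fun i => integrableOn_mul_sub_mul_exp (hp i) (hq i))
    (summable_integral_norm_mul_sub_mul_exp hp hq hpq)

theorem integral_mul_tsum_sub_mul_exp [Countable ι] (hp : ∀ i, 0 < p i)
    (hq : ∀ i, 0 < q i) (hpq : Summable fun i => |p i - q i| / min (p i) (q i) ^ 2) :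
    ∫ v in Set.Ioi (0 : ℝ), v * ∑' i, (p i * rexp (-(p i * v)) - q i * rexp (-(q i * v))) =
      ∑' i, (1 / p i - 1 / q i) := by
  simp only [← tsum_mul_left]
  rw [← integral_tsum_of_summable_integral_norm
    (fun i => integrableOn_mul_sub_mul_exp (hp i) (hq i))
    (summable_integral_norm_mul_sub_mul_exp hp hq hpq)]
  exact tsum_congr fun i => integral_mul_sub_mul_exp (hp i) (hq i)

end PairedExponentials

end Integration

section LambertSeries

/-- The exponential series `∑ wₙ e^{-nv}`, that is, the power series with coefficients `wₙ`
in the variable `e^{-v}`. -/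
noncomputable def expSum (w : ℕ+ → ℝ) (v : ℝ) : ℝ := ∑' n : ℕ+, w n * rexp (-(n * v))

/-- The double exponential series `∑ sₘ wₙ e^{-mnu}`: for `s = 1` it is a Lambert series in the
variable `e^{-u}`. -/
noncomputable def lambertSum (s w : ℕ+ → ℝ) (u : ℝ) : ℝ :=
  ∑' p : ℕ+ × ℕ+, s p.1 * w p.2 * rexp (-(p.1 * p.2 * u))

variable {s w : ℕ+ → ℝ} {u : ℝ}

theorem abs_natCast_mul_le_pow_one {x : ℝ} (hx : |x| ≤ 1) (n : ℕ) : |n * x| ≤ (n : ℝ) ^ 1 := by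
  rw [abs_mul, Nat.abs_cast, pow_one]
  exact mul_le_of_le_one_right n.cast_nonneg hx

theorem summable_lambertSum {k : ℕ} (hs : ∀ m, |s m| ≤ 1) (hw : ∀ n : ℕ+, |w n| ≤ n ^ k)
    (hu : 0 < u) :
    Summable fun p : ℕ+ × ℕ+ => s p.1 * w p.2 * rexp (-(p.1 * p.2 * u)) := by
  have hr : ‖rexp (-u)‖ < 1 := by simpa using hu
  refine .of_norm_bounded (summable_prod_mul_pow k hr) fun p => ?_
  rw [← Real.exp_nat_mul, norm_mul, norm_mul, norm_of_nonneg (exp_pos _).le, Nat.cast_mul,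
    mul_neg]
  gcongr
  exact (mul_le_mul (hs _) (hw _) (abs_nonneg _) zero_le_one).trans_eq (one_mul _)

theorem hasSum_mul_expSum_left
    (h : Summable fun p : ℕ+ × ℕ+ => s p.1 * w p.2 * rexp (-(p.1 * p.2 * u))) :
    HasSum (fun m : ℕ+ => s m * expSum w (m * u)) (lambertSum s w u) := by
  rw [lambertSum, h.tsum_prod]
  simpa only [expSum, ← tsum_mul_left, mul_assoc, mul_left_comm] using h.prod.hasSum

theorem hasSum_mul_expSum_right
    (h : Summable fun p : ℕ+ × ℕ+ => s p.1 * w p.2 * rexp (-(p.1 * p.2 * u))) :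
    HasSum (fun n : ℕ+ => w n * expSum s (n * u)) (lambertSum s w u) := by
  have hswap : (fun p : ℕ+ × ℕ+ => s p.2 * w p.1 * rexp (-(p.2 * p.1 * u))) =
      fun p => w p.1 * s p.2 * rexp (-(p.1 * p.2 * u)) := by
    ext p
    ring_nf
  have hcomm : lambertSum s w u = lambertSum w s u := by
    rw [lambertSum, lambertSum, ← hswap]
    exact ((Equiv.prodComm ℕ+ ℕ+).tsum_eq _).symm
  rw [hcomm]
  exact hasSum_mul_expSum_left (hswap ▸ h.prod_symm)

theorem hasDerivAt_tsum_mul_exp_neg {ι : Type*} {a r : ι → ℝ} {v : ℝ} (hr : ∀ i, 0 ≤ r i)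
    (hv : Summable fun i => a i * r i * rexp (-(r i * v)))
    (hu : Summable fun i => a i * rexp (-(r i * u))) (hvu : v < u) :
    HasDerivAt (fun u => ∑' i, a i * rexp (-(r i * u)))
      (-∑' i, a i * r i * rexp (-(r i * u))) u := by
  rw [← tsum_neg]
  refine hasDerivAt_tsum_of_isPreconnected hv.norm isOpen_Ioi isPreconnected_Ioi
    (t := Set.Ioi v) (g' := fun i y => -(a i * r i * rexp (-(r i * y)))) (fun i y _ => ?_)
    (fun i y (hy : v < y) => ?_) hvu hu hvu
  · convert! (((hasDerivAt_id y).const_mul (r i)).neg.exp).const_mul (a i) using 1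
    simp only [id, Pi.neg_apply]
    ring
  · rw [norm_neg, norm_mul, norm_mul _ (rexp _), norm_of_nonneg (exp_pos _).le,
      norm_of_nonneg (exp_pos _).le]
    have := hr i
    gcongr

theorem hasDerivAt_lambertSum (hs : ∀ m, |s m| ≤ 1) (hw : ∀ n, |w n| ≤ 1) (hu : 0 < u) :
    HasDerivAt (lambertSum (fun m => s m / m) w) (-lambertSum s (fun n => n * w n) u) u := by
  have hone (m : ℕ+) : (1 : ℝ) ≤ m := by exact_mod_cast one_le (a := m)
  have hweight (p : ℕ+ × ℕ+) : s p.1 / p.1 * w p.2 * (p.1 * p.2) = s p.1 * (p.2 * w p.2) := by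
    field_simp
  have hterm := summable_lambertSum (s := s) (w := fun n => n * w n) (k := 1) hs
    (fun n => abs_natCast_mul_le_pow_one (hw n) n) (half_pos hu)
  have hprim := summable_lambertSum (s := fun m => s m / m) (w := w) (k := 0)
    (fun m => by
      rw [abs_div, abs_of_pos (zero_lt_one.trans_le (hone m))]
      exact div_le_one_of_le₀ ((hs m).trans (hone m)) m.val.cast_nonneg)
    (by simpa using hw) hu
  have h := hasDerivAt_tsum_mul_exp_neg (fun p : ℕ+ × ℕ+ => by positivity)
    (by simpa only [hweight] using hterm) hprim (half_lt_self hu)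
  simp only [hweight] at h
  exact h

end LambertSeries

section ResidueClasses

/-- The sign by which `n` is weighted in the difference of the sums over `n ≡ b` and `n ≡ -b`.
The class of `b` takes precedence, so when `b = -b` the sign is the indicator of that class. -/
noncomputable def residueSign (N : ℕ) (b : ZMod N) (n : ℕ+) : ℝ :=
  if (n : ZMod N) = b then 1 else if (n : ZMod N) = -b then -1 else 0

theorem hasSum_pnat_iff_hasSum_nat {f : ℕ → ℝ} (h0 : f 0 = 0) {x : ℝ} :
    HasSum (fun n : ℕ+ => f n) x ↔ HasSum f x := by
  refine PNat.coe_injective.hasSum_iff fun n hn => ?_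
  rcases n.eq_zero_or_pos with rfl | hpos
  · exact h0
  · exact absurd ⟨⟨n, hpos⟩, rfl⟩ hn

theorem tsum_indicator_natCast_eq {N : ℕ} [NeZero N] {f : ℕ → ℝ} (hf : Summable f)
    (b : ZMod N) :
    ∑' n, {n : ℕ | (n : ZMod N) = b}.indicator f n = ∑' k, f (b.val + N * k) := by
  rw [Nat.sumByResidueClasses (hf.indicator _) N, Finset.sum_eq_single b]
  · simp
  · intro j _ hj
    simp [hj]
  · simp

variable {N : ℕ} {b : ZMod N}

theorem abs_residueSign_le_one (b : ZMod N) (n : ℕ+) : |residueSign N b n| ≤ 1 := by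
  unfold residueSign
  split_ifs <;> simp

theorem residueSign_of_eq_neg (hb : b = -b) (n : ℕ+) :
    residueSign N b n = if (n : ZMod N) = b then 1 else 0 := by
  rw [residueSign, ← hb]
  split_ifs <;> rfl

theorem residueSign_of_ne_neg (hb : b ≠ -b) (n : ℕ+) :
    residueSign N b n =
      (if (n : ZMod N) = b then 1 else 0) - if (n : ZMod N) = -b then 1 else 0 := by
  unfold residueSign
  split_ifs with h1 h2
  · exact absurd (h1.symm.trans h2) hb
  all_goals norm_num

theorem expSum_mul_residueSign [NeZero N] (hb : b ≠ -b) {v : ℝ} (hv : 0 < v) :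
    expSum (fun n => n * residueSign N b n) v =
      ∑' k : ℕ, (((b.val + N * k : ℕ) : ℝ) * rexp (-((b.val + N * k : ℕ) * v)) -
        (((-b).val + N * k : ℕ) : ℝ) * rexp (-(((-b).val + N * k : ℕ) * v))) := by
  set f : ℕ → ℝ := fun n => n * rexp (-(n * v)) with hf_def
  have hf : Summable f := by
    simpa [hf_def, mul_comm] using summable_pow_mul_exp_neg_nat_mul 1 hv
  have hclass (c : ZMod N) := hf.indicator {n : ℕ | (n : ZMod N) = c}
  have hprog (c : ZMod N) : Summable fun k : ℕ => f (c.val + N * k) :=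
    hf.comp_injective fun i j h => by simpa [NeZero.ne N] using h
  rw [Summable.tsum_sub (hprog b) (hprog (-b)), ← tsum_indicator_natCast_eq hf,
    ← tsum_indicator_natCast_eq hf, ← (hclass b).tsum_sub (hclass (-b))]
  rw [← ((hasSum_pnat_iff_hasSum_nat (by simp [hf_def, Set.indicator_apply])).2
    ((hclass b).sub (hclass (-b))).hasSum).tsum_eq]
  refine tsum_congr fun n => ?_
  simp only [residueSign_of_ne_neg hb, Set.indicator_apply, Set.mem_ofPred_eq]
  split_ifs <;> simp [hf_def]

theorem not_summable_residueSign_div [NeZero N] (hb : b = -b) :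
    ¬ Summable fun n : ℕ+ => residueSign N b n / n := by
  rintro ⟨x, hx⟩
  refine Real.not_summable_indicator_one_div_natCast (NeZero.ne N) b
    ⟨x, (hasSum_pnat_iff_hasSum_nat (by simp [Set.indicator_apply])).1 ?_⟩
  refine hx.congr_fun fun n => ?_
  rw [residueSign_of_eq_neg hb]
  simp only [Set.indicator_apply, Set.mem_ofPred_eq]
  split_ifs <;> simp

end ResidueClasses

section Cotangent

theorem hasSum_sub_succ_of_antitone {f : ℕ → ℝ} {l : ℝ} (hf : Antitone f)
    (hl : Filter.Tendsto f Filter.atTop (nhds l)) :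
    HasSum (fun k => f k - f (k + 1)) (f 0 - l) := by
  rw [hasSum_iff_tendsto_nat_of_nonneg fun k => sub_nonneg.2 (hf k.le_succ)]
  simpa only [Finset.sum_range_sub'] using hl.const_sub (f 0)

theorem hasSum_cotTerm {x : ℝ} (h0 : 0 < x) (h1 : x < 1) :
    HasSum (fun k : ℕ => 1 / (x - (k + 1)) + 1 / (x + (k + 1)))
      (π * Real.cot (π * x) - 1 / x) := by
  have hx : (x : ℂ) ∈ Complex.integerComplement := by
    rintro ⟨n, hn⟩
    obtain rfl : (n : ℝ) = x := by exact_mod_cast hn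
    norm_cast at h0 h1
    omega
  have h := (summable_cotTerm hx).hasSum
  simp only [cotTerm] at h
  rw [← cot_series_rep' hx] at h
  exact_mod_cast h

theorem hasSum_one_div_sub_one_div_eq_cot {x : ℝ} (h0 : 0 < x) (h1 : x < 1) :
    HasSum (fun k : ℕ => 1 / (x + k) - 1 / (1 - x + k)) (π * Real.cot (π * x)) := by
  have hanti : Antitone fun k : ℕ => 1 / (x + k) := fun i j hij => by
    dsimp only
    gcongr
  have hlim : Filter.Tendsto (fun k : ℕ => 1 / (x + k)) Filter.atTop (nhds 0) := by
    simp only [one_div]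
    exact (Filter.tendsto_atTop_add_const_left _ _ tendsto_natCast_atTop_atTop).inv_tendsto_atTop
  -- The telescoping series turns the terms `1 / (x + k + 1)` of the partial fractions of `cot`
  -- into `1 / (x + k)`.
  convert! (hasSum_cotTerm h0 h1).add (hasSum_sub_succ_of_antitone hanti hlim) using 1
  · ext k
    rw [show x - ((k : ℝ) + 1) = -(1 - x + k) by ring, div_neg]
    push_cast
    ring
  · simp

theorem tsum_one_div_residue_sub_eq_cot {N : ℕ} [NeZero N] {b : ZMod N} (hb : b ≠ 0) :
    ∑' k : ℕ, (1 / ((b.val + N * k : ℕ) : ℝ) - 1 / (((-b).val + N * k : ℕ) : ℝ)) =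
      π / N * Real.cot (π * (b.val / N)) := by
  have hN : (0 : ℝ) < N := by exact_mod_cast NeZero.pos N
  have hval : 0 < b.val := ZMod.val_pos.2 hb
  have hneg : ((-b).val : ℝ) = N - b.val := by
    have : NeZero b := ⟨hb⟩
    rw [ZMod.val_neg_of_ne_zero, Nat.cast_sub b.val_lt.le]
  rw [div_mul_eq_mul_div, ← ((hasSum_one_div_sub_one_div_eq_cot (x := b.val / N) (by positivity)
    ((div_lt_one hN).2 (by exact_mod_cast b.val_lt))).div_const (N : ℝ)).tsum_eq]
  refine tsum_congr fun k => ?_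
  push_cast
  rw [hneg, sub_div, div_div, div_div]
  congr 2 <;> field_simp

theorem cot_pi_mul_div_eq_of_intCast_eq {N : ℕ} [NeZero N] {a b : ℤ}
    (h : (a : ZMod N) = (b : ZMod N)) : Real.cot (π * (a / N)) = Real.cot (π * (b / N)) := by
  obtain ⟨k, hk⟩ := (ZMod.intCast_eq_intCast_iff_dvd_sub b a N).1 h.symm
  have hN : (N : ℝ) ≠ 0 := by exact_mod_cast NeZero.ne N
  obtain rfl : a = b + N * k := by linarith
  have harg : π * (((b + N * k : ℤ) : ℝ) / N) = π * (b / N) + k * π := by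
    push_cast
    field_simp
  rw [harg, Real.cot_eq_cos_div_sin, Real.cot_eq_cos_div_sin, cos_add_int_mul_pi,
    sin_add_int_mul_pi, mul_div_mul_left _ _ (zpow_ne_zero k (by norm_num))]

theorem cot_pi_mul_div_eq_zero_of_eq_neg {N : ℕ} [NeZero N] {b : ℤ} (h : (b : ZMod N) = -b) :
    Real.cot (π * (b / N)) = 0 := by
  have hper := cot_pi_mul_div_eq_of_intCast_eq (a := b) (b := -b) (by simpa using h)
  rw [Real.cot_eq_cos_div_sin, Real.cot_eq_cos_div_sin, Int.cast_neg, neg_div, mul_neg, cos_neg,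
    sin_neg, div_neg] at hper
  rw [Real.cot_eq_cos_div_sin]
  linarith

end Cotangent

section FirstMoment

theorem integral_mul_lambertSum {s w : ℕ+ → ℝ} {k : ℕ} (hs : ∀ m, |s m| ≤ 1)
    (hw : ∀ n : ℕ+, |w n| ≤ n ^ k)
    (hint : IntegrableOn (fun v => v * expSum w v) (Set.Ioi 0)) :
    ∫ u in Set.Ioi (0 : ℝ), u * lambertSum s w u =
      (∑' m : ℕ+, s m / m ^ 2) * ∫ v in Set.Ioi (0 : ℝ), v * expSum w v := by
  have hsum : Summable fun m : ℕ+ => s m / m ^ 2 := by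
    refine .of_norm_bounded (g := fun m : ℕ+ => 1 / (m : ℝ) ^ 2)
      ((summable_one_div_nat_pow.2 one_lt_two).comp_injective PNat.coe_injective) fun m => ?_
    rw [norm_div, norm_of_nonneg (sq_nonneg (m : ℝ))]
    gcongr
    exact hs m
  rw [← integral_mul_tsum_comp_mul (fun m => by positivity) hsum hint]
  exact setIntegral_congr_fun measurableSet_Ioi fun u (hu : 0 < u) => by
    rw [(hasSum_mul_expSum_left (summable_lambertSum hs hw hu)).tsum_eq]

variable {N : ℕ} [NeZero N] {b : ZMod N}

theorem add_one_le_val_add_mul (hb : b ≠ 0) (k : ℕ) :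
    (k + 1 : ℝ) ≤ (b.val + N * k : ℕ) := by
  have hval := ZMod.val_pos.2 hb
  have hk := Nat.le_mul_of_pos_left k (NeZero.pos N)
  exact_mod_cast (by omega : k + 1 ≤ b.val + N * k)

theorem summable_abs_residue_sub_div_min_sq (hb : b ≠ 0) :
    Summable fun k : ℕ => |((b.val + N * k : ℕ) : ℝ) - ((-b).val + N * k : ℕ)| /
      min ((b.val + N * k : ℕ) : ℝ) ((-b).val + N * k : ℕ) ^ 2 := by
  have hsq : Summable fun k : ℕ => 1 / ((k + 1 : ℕ) : ℝ) ^ 2 :=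
    (summable_nat_add_iff 1).2 (summable_one_div_nat_pow.2 one_lt_two)
  refine (hsq.mul_left |(b.val : ℝ) - (-b).val|).of_nonneg_of_le (fun k => by positivity)
    fun k => ?_
  have hgap : ((b.val + N * k : ℕ) : ℝ) - ((-b).val + N * k : ℕ) = b.val - (-b).val := by
    push_cast
    ring
  rw [mul_one_div, hgap, Nat.cast_succ]
  gcongr
  exact le_min (add_one_le_val_add_mul hb k) (add_one_le_val_add_mul (neg_ne_zero.2 hb) k)

theorem integrableOn_and_integral_mul_expSum_residueSign (hb : b ≠ -b) :
    IntegrableOn (fun v => v * expSum (fun n => n * residueSign N b n) v) (Set.Ioi 0) ∧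
    ∫ v in Set.Ioi (0 : ℝ), v * expSum (fun n => n * residueSign N b n) v =
      π / N * Real.cot (π * (b.val / N)) := by
  have hb0 : b ≠ 0 := by
    rintro rfl
    simp at hb
  have hpos {c : ZMod N} (hc : c ≠ 0) (k : ℕ) : (0 : ℝ) < (c.val + N * k : ℕ) :=
    k.cast_add_one_pos.trans_le (add_one_le_val_add_mul hc k)
  have hgap := summable_abs_residue_sub_div_min_sq hb0
  have hexp : Set.EqOn (fun v => v * expSum (fun n => n * residueSign N b n) v) (fun v => _)
      (Set.Ioi 0) := fun v hv => congrArg (v * ·) (expSum_mul_residueSign hb hv)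
  rw [setIntegral_congr_fun measurableSet_Ioi hexp, integrableOn_congr_fun hexp measurableSet_Ioi,
    ← tsum_one_div_residue_sub_eq_cot hb0]
  exact ⟨integrableOn_mul_tsum_sub_mul_exp (hpos hb0) (hpos (neg_ne_zero.2 hb0)) hgap,
    integral_mul_tsum_sub_mul_exp (hpos hb0) (hpos (neg_ne_zero.2 hb0)) hgap⟩

theorem integral_mul_lambertSum_sin_residueSign (θ : ℝ) (hb : b ≠ -b) :
    ∫ u in Set.Ioi (0 : ℝ),
      u * lambertSum (fun m => Real.sin (m * θ)) (fun n => n * residueSign N b n) u =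
      Cl2 θ * (π / N * Real.cot (π * (b.val / N))) := by
  obtain ⟨hint, hvalue⟩ := integrableOn_and_integral_mul_expSum_residueSign hb
  rw [integral_mul_lambertSum (fun _ => abs_sin_le_one _)
    (fun n => abs_natCast_mul_le_pow_one (abs_residueSign_le_one b n) n) hint, hvalue, Cl2]

end FirstMoment

section Divergence

theorem expSum_sin_eq {θ v : ℝ} (hv : 0 < v) :
    expSum (fun m => Real.sin (m * θ)) v =
      rexp (-v) * Real.sin θ / Complex.normSq (1 - rexp (-v) * Complex.exp (θ * Complex.I)) := by
  set z : ℂ := rexp (-v) * Complex.exp (θ * Complex.I) with hz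
  have hnorm : ‖z‖ < 1 := by
    simpa [hz, Complex.norm_exp_ofReal_mul_I, Complex.norm_exp] using hv
  have him (n : ℕ) : (z ^ n).im = Real.sin (n * θ) * rexp (-(n * v)) := by
    rw [hz, mul_pow, ← Complex.exp_nat_mul, ← Complex.ofReal_pow, Complex.im_ofReal_mul,
      ← mul_assoc, ← Complex.ofReal_natCast, ← Complex.ofReal_mul, Complex.exp_ofReal_mul_I_im,
      ← Real.exp_nat_mul, mul_neg, mul_comm]
  have hsum : HasSum (fun n : ℕ => Real.sin (n * θ) * rexp (-(n * v))) ((1 - z)⁻¹).im := by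
    simpa only [him] using Complex.hasSum_im (hasSum_geometric_of_norm_lt_one hnorm)
  have hzim := him 1
  rw [pow_one, Nat.cast_one, one_mul, one_mul] at hzim
  rw [expSum, ((hasSum_pnat_iff_hasSum_nat (by simp)).2 hsum).tsum_eq, Complex.inv_im,
    Complex.sub_im, Complex.one_im, hzim]
  ring

theorem sin_sq_div_four_mul_exp_le {θ v : ℝ} (hv : 0 < v) :
    Real.sin θ ^ 2 / 4 * rexp (-v) ≤
      Real.sin θ * expSum (fun m => Real.sin (m * θ)) v := by
  have hnorm : ‖(rexp (-v) : ℂ) * Complex.exp (θ * Complex.I)‖ = rexp (-v) := by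
    rw [norm_mul, Complex.norm_exp_ofReal_mul_I, mul_one, Complex.norm_real,
      norm_of_nonneg (exp_pos _).le]
  have hlt : rexp (-v) < 1 := by simpa using hv
  have hlow := norm_sub_norm_le (1 : ℂ) (rexp (-v) * Complex.exp (θ * Complex.I))
  have hup := norm_sub_le (1 : ℂ) (rexp (-v) * Complex.exp (θ * Complex.I))
  rw [hnorm, norm_one] at hlow hup
  rw [expSum_sin_eq hv, Complex.normSq_eq_norm_sq]
  set r := ‖1 - (rexp (-v) : ℂ) * Complex.exp (θ * Complex.I)‖
  have hr : 0 < r := by linarith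
  calc Real.sin θ ^ 2 / 4 * rexp (-v) = Real.sin θ ^ 2 * rexp (-v) / 4 := by ring
    _ ≤ Real.sin θ ^ 2 * rexp (-v) / r ^ 2 := by
        gcongr
        nlinarith
    _ = Real.sin θ * (rexp (-v) * Real.sin θ / r ^ 2) := by ring

theorem sum_mul_exp_neg_le_mul_lambertSum {s w : ℕ+ → ℝ} {k : ℕ} {κ σ u : ℝ}
    (hs : ∀ m, |s m| ≤ 1) (hw : ∀ n : ℕ+, |w n| ≤ n ^ k) (hw0 : ∀ n, 0 ≤ w n) (hκ : 0 ≤ κ)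
    (hle : ∀ v, 0 < v → κ * rexp (-v) ≤ σ * expSum s v) (hu : 0 < u) (A : Finset ℕ+) :
    ∑ n ∈ A, κ * w n * rexp (-(n * u)) ≤ σ * lambertSum s w u := by
  have hkernel (n : ℕ+) : κ * w n * rexp (-(n * u)) ≤ σ * (w n * expSum s (n * u)) := by
    linarith [mul_le_mul_of_nonneg_left (hle (n * u) (by positivity)) (hw0 n)]
  have hnonneg (n : ℕ+) : 0 ≤ κ * w n * rexp (-(n * u)) :=
    mul_nonneg (mul_nonneg hκ (hw0 n)) (exp_pos _).le
  exact (Finset.sum_le_sum fun n _ => hkernel n).trans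
    (sum_le_hasSum A (fun n _ => (hnonneg n).trans (hkernel n))
      ((hasSum_mul_expSum_right (summable_lambertSum hs hw hu)).mul_left σ))

theorem not_integrableOn_mul_lambertSum_sin {θ : ℝ} (hθ : Real.sin θ ≠ 0) {e : ℕ+ → ℝ}
    (he0 : ∀ n, 0 ≤ e n) (he1 : ∀ n, e n ≤ 1) (he : ¬ Summable fun n : ℕ+ => e n / n) :
    ¬ IntegrableOn
      (fun u => u * lambertSum (fun m => Real.sin (m * θ)) (fun n => n * e n) u)
      (Set.Ioi 0) := by
  intro hint
  have hscaled : IntegrableOn (fun u => Real.sin θ *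
      (u * lambertSum (fun m => Real.sin (m * θ)) (fun n => n * e n) u)) (Set.Ioi 0) :=
    hint.const_mul _
  have hκ : 0 < Real.sin θ ^ 2 / 4 := by positivity
  have hw (n : ℕ+) : 0 ≤ n * e n := mul_nonneg n.val.cast_nonneg (he0 n)
  have hw_le (n : ℕ+) : |n * e n| ≤ (n : ℝ) ^ 1 :=
    abs_natCast_mul_le_pow_one (abs_le.2 ⟨by linarith [he0 n], he1 n⟩) n
  have hsum : Summable fun n : ℕ+ => Real.sin θ ^ 2 / 4 * (n * e n) / n ^ 2 :=
    summable_div_sq_of_integrableOn_mul (fun n => by positivity)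
      (fun n => mul_nonneg hκ.le (hw n)) (by simpa only [mul_left_comm] using hscaled)
      fun u hu => sum_mul_exp_neg_le_mul_lambertSum (fun _ => abs_sin_le_one _)
        hw_le hw hκ.le (fun v hv => sin_sq_div_four_mul_exp_le hv) hu
  refine he ((summable_mul_left_iff hκ.ne').1 (hsum.congr fun n => ?_))
  field_simp

end Divergence

section ClausenIntegral

theorem zetaN_zpow (N k : ℤ) :
    zetaN N ^ k = Complex.exp (((2 * π * k / N : ℝ) : ℂ) * Complex.I) := by
  rw [zetaN, ← Complex.exp_int_mul]
  push_cast
  ring_nf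

theorem zetaN_zpow_sub_zpow_neg (N k : ℤ) :
    zetaN N ^ k - zetaN N ^ (-k) = 2 * Complex.I * Real.sin (2 * π * k / N) := by
  rw [zpow_neg, zetaN_zpow, ← Complex.exp_neg, Complex.ofReal_sin, Complex.sin, ← neg_mul]
  linear_combination -(Complex.exp (-((2 * π * k / N : ℝ) : ℂ) * Complex.I) -
    Complex.exp (((2 * π * k / N : ℝ) : ℂ) * Complex.I)) * Complex.I_sq

theorem neg_I_mul_one_add_div_one_sub_zetaN_zpow (N b : ℤ) :
    -Complex.I * ((1 + zetaN N ^ b) / (1 - zetaN N ^ b)) = Real.cot (π * (b / N)) := by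
  have harg : 2 * (π : ℂ) * Complex.I * ((b / N : ℝ) : ℂ) =
      ((2 * π * b / N : ℝ) : ℂ) * Complex.I := by
    push_cast
    ring
  rw [Complex.ofReal_cot, Complex.ofReal_mul, Complex.cot_pi_eq_exp_ratio, zetaN_zpow, harg,
    ← Complex.inv_I, div_mul_eq_div_div, add_comm]
  ring

theorem Sser_eq_lambertSum (N : ℕ) (a b : ℤ) (t : ℝ) :
    Sser N a b t = 2 * Complex.I * (lambertSum (fun m => Real.sin (m * (2 * π * a / N)) / m)
      (residueSign N b) (2 * π / N ^ 2 / t) : ℝ) := by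
  rw [Sser, lambertSum, Complex.ofReal_tsum, ← tsum_mul_left]
  refine tsum_congr fun p => ?_
  have hangle : 2 * π * ((a * (p.1 : ℤ) : ℤ) : ℝ) / (N : ℤ) = p.1 * (2 * π * a / N) := by
    push_cast
    ring
  have hexponent : -(2 * π * (p.1 : ℝ) * (p.2 : ℝ)) / (((N : ℤ) : ℝ) ^ 2 * t) =
      -(p.1 * p.2 * (2 * π / N ^ 2 / t)) := by
    push_cast
    ring
  have hsign : (if (p.2 : ℤ) ≡ b [ZMOD N] then (1 : ℂ)
      else if (p.2 : ℤ) ≡ -b [ZMOD N] then -1 else 0) = residueSign N b p.2 := by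
    simp [residueSign, ← ZMod.intCast_eq_intCast_iff, apply_ite ((↑) : ℝ → ℂ)]
  rw [zetaN_zpow_sub_zpow_neg, hangle, hsign]
  rw [← hexponent]
  push_cast
  ring

theorem integral_deriv_Sser_eq_integral_lambertSum {N : ℕ} [NeZero N] (a b : ℤ) :
    ∫ t in Set.Ioi (0 : ℝ), (1 / (Complex.I * N * t)) * deriv (Sser N a b) t =
      N / π * (∫ u in Set.Ioi (0 : ℝ), u * lambertSum (fun m => Real.sin (m * (2 * π * a / N)))
        (fun n => n * residueSign N b n) u : ℝ) := by
  have hN : (0 : ℝ) < N := by exact_mod_cast NeZero.pos N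
  have hNC : (N : ℂ) ≠ 0 := by exact_mod_cast hN.ne'
  set L := lambertSum (fun m => Real.sin (m * (2 * π * a / N))) (fun n => n * residueSign N b n)
  have hderiv (u : ℝ) (hu : 0 < u) := ((hasDerivAt_lambertSum
    (s := fun m => Real.sin (m * (2 * π * a / N))) (fun _ => abs_sin_le_one _)
    (abs_residueSign_le_one (b : ZMod N)) hu).ofReal_comp).const_mul (2 * Complex.I)
  have hsubst : ∫ t in Set.Ioi (0 : ℝ), t⁻¹ • deriv (Sser N a b) t =
      -(2 * π / (N : ℝ) ^ 2)⁻¹ •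
        ∫ u in Set.Ioi (0 : ℝ), u • (2 * Complex.I * ((-L u : ℝ) : ℂ)) := by
    rw [funext (Sser_eq_lambertSum N a b)]
    exact integral_inv_smul_deriv_comp_div (by positivity) hderiv
  have hfactor (t : ℝ) : (1 / (Complex.I * N * t)) * deriv (Sser N a b) t =
      (Complex.I * N)⁻¹ * (t⁻¹ • deriv (Sser N a b) t) := by
    rw [Complex.real_smul, Complex.ofReal_inv, one_div, mul_inv, mul_assoc]
  have hmoment (u : ℝ) : u • (2 * Complex.I * ((-L u : ℝ) : ℂ)) =
      -(2 * Complex.I) * ((u * L u : ℝ) : ℂ) := by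
    rw [Complex.real_smul]
    push_cast
    ring
  simp only [hfactor]
  rw [integral_const_mul, hsubst]
  simp only [hmoment]
  rw [integral_const_mul, integral_complex_ofReal, Complex.real_smul]
  push_cast
  field_simp

theorem integral_mul_lambertSum_sin_residueSign_of_eq_neg {N : ℕ} [NeZero N] {b : ZMod N}
    (θ : ℝ) (hb : b = -b) :
    ∫ u in Set.Ioi (0 : ℝ),
      u * lambertSum (fun m => Real.sin (m * θ)) (fun n => n * residueSign N b n) u = 0 := by
  by_cases hθ : Real.sin θ = 0
  · obtain ⟨k, rfl⟩ := Real.sin_eq_zero_iff.1 hθ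
    have hsin (m : ℕ+) : Real.sin (m * (k * π)) = 0 := by
      rw [← mul_assoc]
      exact_mod_cast Real.sin_int_mul_pi (m * k)
    simp [lambertSum, hsin]
  · refine integral_undef (not_integrableOn_mul_lambertSum_sin hθ (fun n => ?_)
      (fun n => (abs_le.1 (abs_residueSign_le_one b n)).2) (not_summable_residueSign_div hb))
    rw [residueSign_of_eq_neg hb]
    split_ifs <;> simp

end ClausenIntegral

/-- For `a`, `b` not divisible by `N`,
`∫₀^∞ (1/(iNt)) dS(t) = -i·Cl₂(2πa/N)·(1+ζ^b)/(1-ζ^b)`. -/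
theorem integral_dSser (N a b : ℤ) (hN : 1 ≤ N) (ha : ¬ (N ∣ a)) (hb : ¬ (N ∣ b)) :
    ∫ t in Set.Ioi (0 : ℝ), (1 / (Complex.I * N * t)) * deriv (Sser N a b) t =
      -Complex.I * (Cl2 (2 * π * a / N) : ℂ) *
        ((1 + zetaN N ^ b) / (1 - zetaN N ^ b)) := by
  lift N to ℕ using by omega
  have : NeZero N := ⟨by omega⟩
  rw [mul_right_comm, neg_I_mul_one_add_div_one_sub_zetaN_zpow]
  simp only [Int.cast_natCast]
  rw [integral_deriv_Sser_eq_integral_lambertSum]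
  rcases eq_or_ne (b : ZMod N) (-b) with hself | hself
  · rw [integral_mul_lambertSum_sin_residueSign_of_eq_neg _ hself,
      cot_pi_mul_div_eq_zero_of_eq_neg hself]
    simp
  · have hval : ((((b : ZMod N).val : ℕ) : ℤ) : ZMod N) = b := by simp
    rw [integral_mul_lambertSum_sin_residueSign _ hself, ← cot_pi_mul_div_eq_of_intCast_eq hval]
    have hN' : (N : ℂ) ≠ 0 := by exact_mod_cast NeZero.ne N
    push_cast
    field_simp
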